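/- (Main convergence theorem for the exponentiated gradient method with Armijo line search.) Let U be an open convex set of d×d complex matrices containing the set D of density matrices, and let f : U → ℝ be convex and differentiable with Hermitian gradient f', where f' is locally Lipschitz on U (every point of U has a neighborhood in U on which f' is Lipschitz with respect to the Frobenius norm). Fix parameters α > 0, r ∈ (0,1), τ ∈ (0,1), and let (ρ_k) in D and (α_k) be generated by the exponentiated gradient method with Armijo line search. Then every cluster point ρ̄ of the sequence (ρ_k) minimizes f on D, i.e., f(ρ̄) ≤ f(σ) for every density matrix σ. -/

import Mathlib

open scoped Matrix ComplexOrder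

noncomputable section

/-- The space of `d × d` complex matrices. -/
abbrev Mat (d : ℕ) := Matrix (Fin d) (Fin d) ℂ

/-- Matrix exponential of a Hermitian matrix, via the real continuous functional calculus
(i.e. the functional calculus on the eigenvalues). -/
noncomputable def mexp {d : ℕ} (A : Mat d) : Mat d := cfc Real.exp A

/-- Matrix logarithm of a positive definite Hermitian matrix, via the real continuous
functional calculus. -/
noncomputable def mlog {d : ℕ} (A : Mat d) : Mat d := cfc Real.log A

/-- A density matrix: Hermitian, positive semidefinite, trace one. -/
def IsDensity {d : ℕ} (ρ : Mat d) : Prop := ρ.PosSemidef ∧ ρ.trace = 1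

/-- The real part of the Hilbert–Schmidt inner product `tr (Xᴴ Y)` (which is real
when `X` and `Y` are Hermitian). -/
noncomputable def hsInner {d : ℕ} (X Y : Mat d) : ℝ := (Matrix.trace (Xᴴ * Y)).re

/-- `tr (σ log σ) = ∑ᵢ λᵢ log λᵢ` over the eigenvalues of `σ` (the convention
`0 log 0 = 0` matches `Real.log 0 = 0`), via the functional calculus for `x ↦ x log x`. -/
noncomputable def trEnt {d : ℕ} (σ : Mat d) : ℝ :=
  (Matrix.trace (cfc (fun x : ℝ => x * Real.log x) σ)).re

/-- The quantum relative entropy `D(σ, ρ) = tr (σ log σ) - tr (σ log ρ)` (for `σ` a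
density matrix and `ρ` a nonsingular density matrix). -/
noncomputable def qRelEnt {d : ℕ} (σ ρ : Mat d) : ℝ :=
  trEnt σ - (Matrix.trace (σ * mlog ρ)).re

/-- The exponentiated-gradient step `ρ_G(α) = c⁻¹ exp (log ρ - α G)` where
`c = tr exp (log ρ - α G)`. -/
noncomputable def egStep {d : ℕ} (ρ G : Mat d) (α : ℝ) : Mat d :=
  (Matrix.trace (mexp (mlog ρ - α • G)))⁻¹ • mexp (mlog ρ - α • G)

attribute [local instance] Matrix.frobeniusNormedAddCommGroup Matrix.frobeniusNormedSpace

/-- `f` is (Fréchet) differentiable at `x` with gradient `g`, with respect to the real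
inner product `Re tr (Xᴴ Y)`: the derivative is `V ↦ Re tr (gᴴ V)`. -/
def HasMatGradientAt {d : ℕ} (f : Mat d → ℝ) (g : Mat d) (x : Mat d) : Prop :=
  ∃ L : Mat d →L[ℝ] ℝ, HasFDerivAt f L x ∧ ∀ V : Mat d, L V = (Matrix.trace (gᴴ * V)).re

/-- The sequences `(ρ_k)` and `(α_k)` are generated by the exponentiated gradient method
with Armijo line search with parameters `α > 0`, `r ∈ (0,1)`, `τ ∈ (0,1)`: the initial
iterate is nonsingular, `ρ_{k+1} = ρ_k(α_k)`, each `α_k = α rᵐ` for some natural `m`, the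
Armijo condition holds at `α_k`, and either `m = 0` or the Armijo condition fails at
`α_k / r`. -/
def IsEGArmijo {d : ℕ} (f : Mat d → ℝ) (f' : Mat d → Mat d) (α r τ : ℝ)
    (ρseq : ℕ → Mat d) (αseq : ℕ → ℝ) : Prop :=
  (ρseq 0).PosDef ∧
  (∀ k, ρseq (k + 1) = egStep (ρseq k) (f' (ρseq k)) (αseq k)) ∧
  (∀ k, ∃ m : ℕ, αseq k = α * r ^ m ∧
    f (ρseq (k + 1)) ≤ f (ρseq k) + τ * hsInner (f' (ρseq k)) (ρseq (k + 1) - ρseq k) ∧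
    (m = 0 ∨
      f (egStep (ρseq k) (f' (ρseq k)) (αseq k / r)) >
        f (ρseq k) +
          τ * hsInner (f' (ρseq k)) (egStep (ρseq k) (f' (ρseq k)) (αseq k / r) - ρseq k)))

section P1

attribute [local instance] instTopologicalSpaceMatrix

theorem aux_specw {d : ℕ} {A B : Mat d} (hA : A.IsHermitian) (hB : B.IsHermitian) :
    ∃ p : Fin d → Fin d → ℝ, (∀ i j, 0 ≤ p i j) ∧ ∀ f g : ℝ → ℝ,
      (Matrix.trace (cfc f A * cfc g B)).re =
        ∑ i, ∑ j, p i j * (f (hA.eigenvalues i) * g (hB.eigenvalues j)) := by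
  set U : Mat d := (hA.eigenvectorUnitary : Mat d) with hU
  set V : Mat d := (hB.eigenvectorUnitary : Mat d) with hV
  refine ⟨fun i j => Complex.normSq ((star U * V) i j), fun i j => Complex.normSq_nonneg _, ?_⟩
  intro f g
  rw [hA.cfc_eq, hB.cfc_eq, Matrix.IsHermitian.cfc, Matrix.IsHermitian.cfc,
    Unitary.conjStarAlgAut_apply, Unitary.conjStarAlgAut_apply, ← hU, ← hV]
  set W := star U * V with hW
  have hW' : star V * U = star W := by simp [hW]
  have h1 : ∀ F G : Mat d, Matrix.trace (U * F * star U * (V * G * star V)) =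
      Matrix.trace (F * W * (G * star W)) := by
    intro F G
    rw [← hW', hW]
    calc _ = Matrix.trace (U * (F * star U * V * G * star V)) := by simp only [mul_assoc]
      _ = _ := by rw [Matrix.trace_mul_comm]; simp only [mul_assoc]
  have h2 := h1 (Matrix.diagonal (RCLike.ofReal ∘ f ∘ hA.eigenvalues))
    (Matrix.diagonal (RCLike.ofReal ∘ g ∘ hB.eigenvalues))
  refine (congrArg Complex.re h2).trans ?_
  rw [Matrix.trace, Complex.re_sum]
  refine Finset.sum_congr rfl fun i _ => ?_
  rw [Matrix.diag_apply, Matrix.mul_apply, Complex.re_sum]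
  refine Finset.sum_congr rfl fun j _ => ?_
  rw [Matrix.diagonal_mul, Matrix.diagonal_mul, Matrix.star_apply]
  simp [Complex.normSq_apply]
  ring

theorem aux_herm_mlog {d : ℕ} (A : Mat d) : (mlog A).IsHermitian :=
  cfc_predicate (R := ℝ) (p := IsSelfAdjoint) Real.log A

theorem aux_cont {d : ℕ} (A : Mat d) (f : ℝ → ℝ) : ContinuousOn f (spectrum ℝ A) :=
  Set.Finite.continuousOn (Matrix.finite_real_spectrum) f

theorem aux_mexp_posDef {d : ℕ} {H : Mat d} (hH : H.IsHermitian) : (mexp H).PosDef := by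
  rw [mexp, hH.cfc_eq, Matrix.IsHermitian.cfc, Unitary.conjStarAlgAut_apply]
  refine (Matrix.IsUnit.posDef_star_right_conjugate_iff ?_).2 ?_
  · exact (Unitary.toUnits hH.eigenvectorUnitary).isUnit
  · refine Matrix.PosDef.diagonal ?_
    intro i
    change (0 : ℂ) < ((Real.exp (hH.eigenvalues i) : ℝ) : ℂ)
    exact_mod_cast Real.exp_pos _

theorem aux_cfc_id {d : ℕ} {A : Mat d} (hA : A.IsHermitian) : cfc (fun x : ℝ => x) A = A :=
  cfc_id' ℝ A hA.isSelfAdjoint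

theorem aux_step {d : ℕ} (hd : 0 < d) {ρ G : Mat d} (hG : G.IsHermitian) (β : ℝ) :
    (egStep ρ G β).PosDef ∧ (egStep ρ G β).trace = 1 ∧
      ∃ s : ℝ, mlog (egStep ρ G β) = mlog ρ - β • G - s • (1 : Mat d) := by
  have : Nonempty (Fin d) := ⟨⟨0, hd⟩⟩
  have hH : (mlog ρ - β • G).IsHermitian := by
    refine (aux_herm_mlog ρ).sub ?_
    simp [Matrix.IsHermitian, Matrix.conjTranspose_smul, hG.eq]
  unfold egStep
  set H := mlog ρ - β • G with hHdef
  have hP := aux_mexp_posDef hH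
  have ht := hP.trace_pos
  obtain ⟨c, hc, hceq⟩ : ∃ c : ℝ, 0 < c ∧ (mexp H).trace = (c : ℂ) := by
    rw [Complex.lt_def] at ht
    exact ⟨(mexp H).trace.re, ht.1, Complex.ext rfl ht.2.symm⟩
  have e : ((mexp H).trace)⁻¹ • mexp H = (c⁻¹ : ℝ) • mexp H := by
    rw [hceq, ← Complex.ofReal_inv]
    ext i j
    simp
  refine ⟨?_, ?_, Real.log c, ?_⟩
  · rw [e]; exact hP.smul (inv_pos.2 hc)
  · rw [Matrix.trace_smul, smul_eq_mul, inv_mul_cancel₀ ht.ne']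
  · rw [e, mexp, mlog, ← cfc_smul (S := ℝ) _ _ _ (aux_cont H _)]
    rw [← cfc_comp' (R := ℝ) Real.log (fun x => c⁻¹ • Real.exp x) H
      (((Matrix.finite_real_spectrum).image _).continuousOn _) (aux_cont H _) hH.isSelfAdjoint]
    have : (fun x => Real.log (c⁻¹ • Real.exp x)) = fun x => x - Real.log c := by
      funext x
      rw [smul_eq_mul, Real.log_mul (inv_pos.2 hc).ne' (Real.exp_pos x).ne', Real.log_exp,
        Real.log_inv]
      ring
    rw [this, cfc_sub (R := ℝ) _ _ _ (aux_cont H _) (aux_cont H _), aux_cfc_id hH,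
      cfc_const _ _ hH.isSelfAdjoint, Algebra.algebraMap_eq_smul_one]

theorem aux_eig_le {d : ℕ} {A : Mat d} (hA : IsDensity A) (i : Fin d) :
    0 ≤ hA.1.isHermitian.eigenvalues i ∧ hA.1.isHermitian.eigenvalues i ≤ 1 := by
  have h0 := hA.1.eigenvalues_nonneg
  refine ⟨h0 i, ?_⟩
  have h := hA.1.isHermitian.trace_eq_sum_eigenvalues
  replace h := hA.2.symm.trans h
  have h' : (1 : ℝ) = ∑ i, hA.1.isHermitian.eigenvalues i := by
    have := congrArg Complex.re h
    simpa using this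
  rw [h']
  exact Finset.single_le_sum (f := hA.1.isHermitian.eigenvalues) (fun j _ => h0 j) (Finset.mem_univ i)

theorem aux_cfc_one {d : ℕ} {A : Mat d} (hA : A.IsHermitian) : cfc (fun _ : ℝ => (1:ℝ)) A = 1 :=
  cfc_const_one ℝ A hA.isSelfAdjoint

theorem aux_cfc_sq {d : ℕ} {A : Mat d} (hA : A.IsHermitian) : cfc (fun x : ℝ => x * x) A = A * A := by
  rw [cfc_mul (R := ℝ) _ _ _ (aux_cont A _) (aux_cont A _), aux_cfc_id hA]

theorem aux_cfc_ent {d : ℕ} {A : Mat d} (hA : A.IsHermitian) :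
    cfc (fun x : ℝ => x * Real.log x) A = A * mlog A := by
  rw [cfc_mul (R := ℝ) _ _ _ (aux_cont A _) (aux_cont A _), aux_cfc_id hA, mlog]

/-- Klein's inequality -/
theorem aux_klein {d : ℕ} {A B : Mat d} (hA : A.PosDef) (hB : B.PosDef) (tA : A.trace = 1)
    (tB : B.trace = 1) : 0 ≤ (Matrix.trace (A * (mlog A - mlog B))).re := by
  have hA' := hA.isHermitian
  have hB' := hB.isHermitian
  obtain ⟨p, hp, h⟩ := aux_specw hA' hB'
  have e1 := h (fun x => x * Real.log x) (fun _ => 1)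
  have e2 := h (fun x => x) Real.log
  have e3 := h (fun x => x) (fun _ => 1)
  have e4 := h (fun _ => 1) (fun x => x)
  rw [aux_cfc_ent hA', aux_cfc_one hB', mul_one] at e1
  rw [aux_cfc_id hA'] at e2
  change (A * mlog B).trace.re = _ at e2
  rw [aux_cfc_id hA', aux_cfc_one hB', mul_one, tA] at e3
  rw [aux_cfc_id hB', aux_cfc_one hA', one_mul, tB] at e4
  rw [mul_sub, Matrix.trace_sub, Complex.sub_re, e1, e2]
  have e5 := e3.symm.trans e4
  rw [← sub_eq_zero, ← Finset.sum_sub_distrib] at e5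
  rw [← Finset.sum_sub_distrib, ← e5]
  refine Finset.sum_le_sum fun i _ => ?_
  rw [← Finset.sum_sub_distrib, ← Finset.sum_sub_distrib]
  refine Finset.sum_le_sum fun j _ => ?_
  rw [← mul_sub, ← mul_sub]
  refine mul_le_mul_of_nonneg_left ?_ (hp i j)
  have ha := hA.eigenvalues_pos i
  have hb := hB.eigenvalues_pos j
  set a := hA'.eigenvalues i
  set b := hB'.eigenvalues j
  have := Real.log_le_sub_one_of_pos (div_pos hb ha)
  rw [Real.log_div hb.ne' ha.ne'] at this
  have h3 := mul_le_mul_of_nonneg_left this ha.le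
  have : a * (b / a - 1) = b - a := by field_simp
  nlinarith

theorem aux_logmono {a b : ℝ} (ha : 0 < a) (hb : 0 < b) (ha1 : a ≤ 1) (hb1 : b ≤ 1) :
    (a - b) * (a - b) ≤ (a - b) * (Real.log a - Real.log b) := by
  have key : ∀ {a b : ℝ}, 0 < a → 0 < b → a ≤ 1 → b ≤ a → a - b ≤ Real.log a - Real.log b := by
    intro a b ha hb ha1 hba
    have := Real.log_le_sub_one_of_pos (div_pos hb ha)
    rw [Real.log_div hb.ne' ha.ne'] at this
    have h2 : (a - b) ≤ (a - b) / a := by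
      rw [le_div_iff₀ ha]; nlinarith
    have h3 : (a - b) / a = 1 - b / a := by field_simp
    linarith
  rcases le_total b a with h | h
  · exact mul_le_mul_of_nonneg_left (key ha hb ha1 h) (by linarith)
  · nlinarith [key hb ha hb1 h]

theorem aux_strong {d : ℕ} {A B : Mat d} (hA : A.PosDef) (hB : B.PosDef) (tA : A.trace = 1)
    (tB : B.trace = 1) : (Matrix.trace ((A - B) * (A - B))).re ≤
      (Matrix.trace ((A - B) * (mlog A - mlog B))).re := by
  have hA' := hA.isHermitian
  have hB' := hB.isHermitian
  obtain ⟨p, hp, h⟩ := aux_specw hA' hB'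
  have e1 := h (fun x => x * Real.log x) (fun _ => 1)
  have e2 := h (fun x => x) Real.log
  have e3 := h Real.log (fun x => x)
  have e4 := h (fun _ => 1) (fun x => x * Real.log x)
  have e5 := h (fun x => x * x) (fun _ => 1)
  have e6 := h (fun x => x) (fun x => x)
  have e7 := h (fun _ => 1) (fun x => x * x)
  rw [aux_cfc_ent hA', aux_cfc_one hB', mul_one] at e1
  rw [aux_cfc_id hA'] at e2
  change (A * mlog B).trace.re = _ at e2
  rw [aux_cfc_id hB', Matrix.trace_mul_comm] at e3
  change (B * mlog A).trace.re = _ at e3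
  rw [aux_cfc_ent hB', aux_cfc_one hA', one_mul] at e4
  rw [aux_cfc_sq hA', aux_cfc_one hB', mul_one] at e5
  rw [aux_cfc_id hA', aux_cfc_id hB'] at e6
  rw [aux_cfc_sq hB', aux_cfc_one hA', one_mul] at e7
  have e6' := e6
  rw [Matrix.trace_mul_comm] at e6'
  simp only [mul_sub, sub_mul, Matrix.trace_sub, Complex.sub_re]
  rw [e1, e2, e3, e4, e5, e6, e6', e7]
  simp only [← Finset.sum_sub_distrib]
  refine Finset.sum_le_sum fun i _ => Finset.sum_le_sum fun j _ => ?_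
  have ha := hA.eigenvalues_pos i
  have hb := hB.eigenvalues_pos j
  have ha1 := (aux_eig_le ⟨hA.posSemidef, tA⟩ i).2
  have hb1 := (aux_eig_le ⟨hB.posSemidef, tB⟩ j).2
  have := mul_le_mul_of_nonneg_left (aux_logmono ha hb ha1 hb1) (hp i j)
  nlinarith

theorem aux_log_nonpos {d : ℕ} {A B : Mat d} (hA : IsDensity A) (hB : IsDensity B) :
    (Matrix.trace (A * mlog B)).re ≤ 0 := by
  have hA' := hA.1.isHermitian
  have hB' := hB.1.isHermitian
  obtain ⟨p, hp, h⟩ := aux_specw hA' hB'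
  have e2 := h (fun x => x) Real.log
  rw [aux_cfc_id hA'] at e2
  change (A * mlog B).trace.re = _ at e2
  rw [e2]
  refine Finset.sum_nonpos fun i _ => Finset.sum_nonpos fun j _ => ?_
  refine mul_nonpos_of_nonneg_of_nonpos (hp i j) ?_
  exact mul_nonpos_of_nonneg_of_nonpos (aux_eig_le hA i).1
    (Real.log_nonpos (aux_eig_le hB j).1 (aux_eig_le hB j).2)

theorem aux_sq_le {d : ℕ} {A : Mat d} (hA : IsDensity A) :
    (Matrix.trace (A * A)).re ≤ 1 := by
  have hA' := hA.1.isHermitian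
  obtain ⟨p, hp, h⟩ := aux_specw hA' hA'
  have e2 := h (fun x => x * x) (fun _ => 1)
  have e3 := h (fun x => x) (fun _ => 1)
  rw [aux_cfc_sq hA', aux_cfc_one hA', mul_one] at e2
  rw [aux_cfc_id hA', aux_cfc_one hA', mul_one, hA.2] at e3
  rw [Complex.one_re] at e3
  rw [e2, e3]
  refine Finset.sum_le_sum fun i _ => Finset.sum_le_sum fun j _ => ?_
  refine mul_le_mul_of_nonneg_left ?_ (hp i j)
  have := aux_eig_le hA i
  nlinarith [this.1, this.2]

end P1

theorem aux_norm_sq {d : ℕ} (X : Mat d) : ‖X‖ ^ 2 = hsInner X X := by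
  rw [Matrix.frobenius_norm_def, ← Real.sqrt_eq_rpow, Real.sq_sqrt (by positivity), hsInner,
    Matrix.trace, Complex.re_sum, Finset.sum_comm]
  refine Finset.sum_congr rfl fun i _ => ?_
  rw [Matrix.diag_apply, Matrix.mul_apply, Complex.re_sum]
  refine Finset.sum_congr rfl fun j _ => ?_
  rw [Matrix.conjTranspose_apply, Real.rpow_two, ← Complex.normSq_eq_norm_sq]
  simp [Complex.normSq_apply]

theorem aux_hs_comm {d : ℕ} (X Y : Mat d) : hsInner X Y = hsInner Y X := by
  have : (Xᴴ * Y).trace = star ((Yᴴ * X).trace) := by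
    rw [← Matrix.trace_conjTranspose, Matrix.conjTranspose_mul, Matrix.conjTranspose_conjTranspose]
  rw [hsInner, hsInner, this]
  simp

theorem aux_hs_sub {d : ℕ} (X Y Z : Mat d) : hsInner X (Y - Z) = hsInner X Y - hsInner X Z := by
  simp [hsInner, mul_sub]

theorem aux_hs_sub_left {d : ℕ} (X Y Z : Mat d) :
    hsInner (X - Y) Z = hsInner X Z - hsInner Y Z := by
  rw [aux_hs_comm, aux_hs_sub, aux_hs_comm Z, aux_hs_comm Z]

theorem aux_hs_smul {d : ℕ} (X Y : Mat d) (c : ℝ) : hsInner X (c • Y) = c * hsInner X Y := by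
  simp [hsInner]

theorem aux_hs_smul_left {d : ℕ} (X Y : Mat d) (c : ℝ) : hsInner (c • X) Y = c * hsInner X Y := by
  rw [aux_hs_comm, aux_hs_smul, aux_hs_comm]

theorem aux_young {d : ℕ} (X Y : Mat d) {L : ℝ} (hL : 0 < L) (h : ‖X‖ ≤ L * ‖Y‖) :
    hsInner X Y ≤ L * ‖Y‖ ^ 2 := by
  have h0 : 0 ≤ ‖X - L • Y‖ ^ 2 := sq_nonneg _
  rw [aux_norm_sq, aux_hs_sub, aux_hs_sub_left, aux_hs_sub_left, aux_hs_smul, aux_hs_smul,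
    aux_hs_smul_left, aux_hs_smul_left, aux_hs_comm Y X, ← aux_norm_sq, ← aux_norm_sq] at h0
  have h1 : ‖X‖ ^ 2 ≤ (L * ‖Y‖) ^ 2 := pow_le_pow_left₀ (norm_nonneg _) h 2
  have h2 : 0 ≤ (2 * L) * (L * ‖Y‖ ^ 2 - hsInner X Y) := by nlinarith
  have := nonneg_of_mul_nonneg_right h2 (by linarith)
  linarith

theorem aux_compact {d : ℕ} : IsCompact {σ : Mat d | IsDensity σ} := by
  have : ProperSpace (Mat d) := FiniteDimensional.proper ℝ (Mat d)
  refine Metric.isCompact_of_isClosed_isBounded ?_ ?_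
  · have : {σ : Mat d | IsDensity σ} = {σ : Mat d | σᴴ = σ} ∩
        (⋂ x : Fin d → ℂ, {σ : Mat d | 0 ≤ star x ⬝ᵥ (σ *ᵥ x)}) ∩ {σ : Mat d | σ.trace = 1} := by
      ext σ
      simp only [IsDensity, Matrix.posSemidef_iff_dotProduct_mulVec, Set.mem_setOf_eq,
        Set.mem_inter_iff, Set.mem_iInter, Matrix.IsHermitian]
    rw [this]
    refine (IsClosed.inter ?_ (isClosed_iInter fun x => ?_)).inter ?_
    · exact isClosed_eq (continuous_id.matrix_conjTranspose) continuous_id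
    · exact isClosed_le continuous_const
        (continuous_const.dotProduct (continuous_id.matrix_mulVec continuous_const))
    · exact isClosed_eq (continuous_id.matrix_trace) continuous_const
  · refine (Metric.isBounded_closedBall (x := (0 : Mat d)) (r := 1)).subset ?_
    intro σ hσ
    rw [mem_closedBall_zero_iff]
    have h := aux_norm_sq σ
    have h2 := aux_sq_le hσ
    rw [hsInner, hσ.1.isHermitian.eq] at h
    nlinarith [norm_nonneg σ]

theorem aux_grad {d : ℕ} {U : Set (Mat d)} {f : Mat d → ℝ} (hconv : ConvexOn ℝ U f)
    {g x y : Mat d} (hx : x ∈ U) (hy : y ∈ U) (hg : HasMatGradientAt f g x) :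
    f x + hsInner g (y - x) ≤ f y := by
  obtain ⟨L, hL, hLv⟩ := hg
  have hc : ConvexOn ℝ (Set.Icc (0 : ℝ) 1) (fun t : ℝ => f (AffineMap.lineMap x y t)) := by
    refine (hconv.comp_affineMap (AffineMap.lineMap (k := ℝ) x y)).subset ?_ (convex_Icc _ _)
    intro t ht
    exact hconv.1.lineMap_mem hx hy ht
  have hline : HasDerivAt (fun t : ℝ => (AffineMap.lineMap x y t : Mat d)) (y - x) 0 :=
    AffineMap.hasDerivAt_lineMap
  have hL0 : HasFDerivAt f L (AffineMap.lineMap x y (0 : ℝ)) := by simpa using hL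
  have hd : HasDerivAt (fun t : ℝ => f (AffineMap.lineMap x y t)) (L (y - x)) 0 :=
    hL0.comp_hasDerivAt 0 hline
  have := hc.le_slope_of_hasDerivAt (by simp) (by simp) zero_lt_one hd
  rw [hLv] at this
  simp [slope] at this
  rw [hsInner]
  linarith

theorem aux_lip {d : ℕ} {U : Set (Mat d)} (hDU : {σ : Mat d | IsDensity σ} ⊆ U)
    {f' : Mat d → Mat d} (hlip : ∀ x ∈ U, ∃ V ∈ nhds x, V ⊆ U ∧
      ∃ L : ℝ, ∀ a ∈ V, ∀ b ∈ V, ‖f' a - f' b‖ ≤ L * ‖a - b‖) :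
    ∃ L : ℝ, 0 < L ∧ ∀ a b, IsDensity a → IsDensity b → ‖f' a - f' b‖ ≤ L * ‖a - b‖ := by
  have : LocallyLipschitzOn {σ : Mat d | IsDensity σ} f' := by
    intro x hx
    obtain ⟨V, hV, -, L, hL⟩ := hlip x (hDU hx)
    refine ⟨L.toNNReal, V, mem_nhdsWithin_of_mem_nhds hV, ?_⟩
    refine LipschitzOnWith.of_dist_le_mul fun a ha b hb => ?_
    rw [dist_eq_norm, dist_eq_norm]
    exact (hL a ha b hb).trans (mul_le_mul_of_nonneg_right (Real.le_coe_toNNReal L) (norm_nonneg _))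
  obtain ⟨K, hK⟩ := this.exists_lipschitzOnWith_of_compact aux_compact
  refine ⟨K + 1, by positivity, fun a b ha hb => ?_⟩
  have := hK.dist_le_mul a ha b hb
  rw [dist_eq_norm, dist_eq_norm] at this
  nlinarith [norm_nonneg (a - b)]

/-- Three point identity with Klein's inequality. -/
theorem aux_three {d : ℕ} (hd : 0 < d) {ρ G σ : Mat d} (hρ : ρ.PosDef) (tρ : ρ.trace = 1)
    (hG : G.IsHermitian) (β : ℝ) (hσ : IsDensity σ) :
    β * hsInner G (egStep ρ G β - σ) ≤
      (Matrix.trace (σ * mlog (egStep ρ G β))).re - (Matrix.trace (σ * mlog ρ)).re := by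
  obtain ⟨hP, hT, s, hs⟩ := aux_step hd (ρ := ρ) hG β
  have hk := aux_klein hP hρ hT tρ
  rw [hs] at hk ⊢
  set R := egStep ρ G β
  rw [hsInner, hG.eq]
  simp only [mul_sub, Matrix.trace_sub, Complex.sub_re, mul_smul_comm, Matrix.trace_smul, mul_one,
    hT, hσ.2, Complex.smul_re, smul_eq_mul, Complex.one_re] at hk ⊢
  rw [Matrix.trace_mul_comm G R, Matrix.trace_mul_comm G σ]
  linarith

theorem aux_two {d : ℕ} (hd : 0 < d) {ρ G : Mat d} (hρ : ρ.PosDef) (tρ : ρ.trace = 1)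
    (hG : G.IsHermitian) (β : ℝ) :
    ‖egStep ρ G β - ρ‖ ^ 2 ≤ - (β * hsInner G (egStep ρ G β - ρ)) := by
  obtain ⟨hP, hT, s, hs⟩ := aux_step hd (ρ := ρ) hG β
  have hk := aux_strong hP hρ hT tρ
  rw [hs] at hk
  set R := egStep ρ G β
  have h1 : (R - ρ)ᴴ = R - ρ := (hP.isHermitian.sub hρ.isHermitian).eq
  have h2 : (R - ρ).trace = 0 := by rw [Matrix.trace_sub, hT, tρ, sub_self]
  rw [aux_norm_sq, hsInner, h1, hsInner, hG.eq, Matrix.trace_mul_comm G]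
  set Z := R - ρ
  refine hk.trans (le_of_eq ?_)
  simp only [mul_sub, Matrix.trace_sub, Complex.sub_re, mul_smul_comm, Matrix.trace_smul, mul_one,
    h2, Complex.smul_re, smul_eq_mul, Complex.zero_re]
  ring

/-- main convergence theorem: every cluster point of the iterates of the
exponentiated gradient method with Armijo line search minimizes `f` over the density
matrices. -/
theorem stmt_13 {d : ℕ} (hd : 0 < d) (U : Set (Mat d)) (hUopen : IsOpen U)
    (hUconv : Convex ℝ U) (hDU : {σ : Mat d | IsDensity σ} ⊆ U)
    (f : Mat d → ℝ) (f' : Mat d → Mat d)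
    (hconv : ConvexOn ℝ U f)
    (hgrad : ∀ x ∈ U, HasMatGradientAt f (f' x) x)
    (hherm : ∀ x ∈ U, (f' x).IsHermitian)
    (hlip : ∀ x ∈ U, ∃ V ∈ nhds x, V ⊆ U ∧
      ∃ L : ℝ, ∀ a ∈ V, ∀ b ∈ V, ‖f' a - f' b‖ ≤ L * ‖a - b‖)
    (α r τ : ℝ) (hα : 0 < α) (hr : r ∈ Set.Ioo (0:ℝ) 1) (hτ : τ ∈ Set.Ioo (0:ℝ) 1)
    (ρseq : ℕ → Mat d) (αseq : ℕ → ℝ)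
    (hmem : ∀ k, IsDensity (ρseq k))
    (halg : IsEGArmijo f f' α r τ ρseq αseq)
    (ρbar : Mat d) (hbar : MapClusterPt ρbar Filter.atTop ρseq) :
    ∀ σ : Mat d, IsDensity σ → f ρbar ≤ f σ := by
  obtain ⟨h0, hstep, harm⟩ := halg
  obtain ⟨hr0, hr1⟩ := hr
  obtain ⟨hτ0, hτ1⟩ := hτ
  have hU : ∀ k, ρseq k ∈ U := fun k => hDU (hmem k)
  have hG : ∀ k, (f' (ρseq k)).IsHermitian := fun k => hherm _ (hU k)
  have hpd : ∀ k, (ρseq k).PosDef := by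
    intro k
    cases k with
    | zero => exact h0
    | succ k => rw [hstep k]; exact (aux_step hd (hG k) _).1
  obtain ⟨L, hL0, hL⟩ := aux_lip hDU hlip
  have hαpos : ∀ k, 0 < αseq k := by
    intro k
    obtain ⟨m, hm, -⟩ := harm k
    rw [hm]; positivity
  have hαle : ∀ k, αseq k ≤ α := by
    intro k
    obtain ⟨m, hm, -⟩ := harm k
    rw [hm]
    have : r ^ m ≤ 1 := pow_le_one₀ hr0.le hr1.le
    nlinarith
  -- lower bound for the step sizes
  obtain ⟨δ, hδ, hδle⟩ : ∃ δ : ℝ, 0 < δ ∧ ∀ k, δ ≤ αseq k := by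
    refine ⟨min α (r * ((1 - τ) / L)), lt_min hα (mul_pos hr0 (div_pos (by linarith) hL0)), ?_⟩
    intro k
    obtain ⟨m, hm, -, h⟩ := harm k
    rcases h with h | h
    · refine (min_le_left _ _).trans ?_
      rw [hm, h]; simp
    · refine (min_le_right _ _).trans ?_
      set β := αseq k / r with hβ
      have hβ0 : 0 < β := div_pos (hαpos k) hr0
      set R := egStep (ρseq k) (f' (ρseq k)) β with hR
      have hRd : IsDensity R :=
        ⟨(aux_step hd (hG k) β).1.posSemidef, (aux_step hd (hG k) β).2.1⟩
      have h2 := aux_two hd (hpd k) (hmem k).2 (hG k) β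
      rw [← hR] at h2
      have hg := aux_grad hconv (hDU hRd) (hU k) (hgrad R (hDU hRd))
      have hy := aux_young (f' R - f' (ρseq k)) (R - ρseq k) hL0 (hL _ _ hRd (hmem k))
      rw [aux_hs_sub_left] at hy
      have e : hsInner (f' R) (ρseq k - R) = - hsInner (f' R) (R - ρseq k) := by
        rw [aux_hs_sub, aux_hs_sub]; ring
      rw [e] at hg
      set q := hsInner (f' (ρseq k)) (R - ρseq k)
      set n2 := ‖R - ρseq k‖ ^ 2
      have hn2 : 0 ≤ n2 := sq_nonneg _
      have h3 : (1 - τ) * (-q) < L * n2 := by nlinarith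
      have h4 : (1 - τ) * n2 ≤ β * ((1 - τ) * (-q)) := by nlinarith
      have h5 : (1 - τ) * n2 < β * (L * n2) := lt_of_le_of_lt h4 (mul_lt_mul_of_pos_left h3 hβ0)
      have h6 : 1 - τ < β * L := by
        by_contra hcon
        push Not at hcon
        nlinarith [mul_le_mul_of_nonneg_right hcon hn2]
      have h7 : (1 - τ) / L ≤ β := by
        rw [div_le_iff₀ hL0]; exact h6.le
      have h8 : r * β = αseq k := by rw [hβ]; field_simp
      rw [← h8]
      exact mul_le_mul_of_nonneg_left h7 hr0.le
  have harm' : ∀ k, f (ρseq (k + 1)) ≤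
      f (ρseq k) + τ * hsInner (f' (ρseq k)) (ρseq (k + 1) - ρseq k) := by
    intro k
    obtain ⟨m, -, h, -⟩ := harm k
    exact h
  have hmono : Antitone (fun k => f (ρseq k)) := by
    refine antitone_nat_of_succ_le fun k => ?_
    have h2 := aux_two hd (hpd k) (hmem k).2 (hG k) (αseq k)
    rw [← hstep k] at h2
    have h3 : 0 ≤ αseq k * (- hsInner (f' (ρseq k)) (ρseq (k + 1) - ρseq k)) := by
      nlinarith [sq_nonneg ‖ρseq (k + 1) - ρseq k‖]
    have h4 := nonneg_of_mul_nonneg_right h3 (hαpos k)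
    have := harm' k
    nlinarith
  have hbarD : IsDensity ρbar :=
    aux_compact.isClosed.mem_of_mapClusterPt hbar (Filter.Eventually.of_forall hmem)
  have hcont : ContinuousAt f ρbar := by
    obtain ⟨_, h, -⟩ := hgrad ρbar (hDU hbarD)
    exact h.continuousAt
  have hlow : ∀ k, f ρbar ≤ f (ρseq k) := by
    intro k
    have hc : MapClusterPt (f ρbar) Filter.atTop (fun n => f (ρseq n)) :=
      hbar.continuousAt_comp hcont
    refine (isClosed_Iic (a := f (ρseq k))).mem_of_mapClusterPt hc ?_
    filter_upwards [Filter.eventually_ge_atTop k] with n hn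
    exact hmono hn
  intro σ hσ
  by_contra hcon
  push Not at hcon
  set T : ℕ → ℝ := fun k => (Matrix.trace (σ * mlog (ρseq k))).re with hT
  have hTle : ∀ k, T k ≤ 0 := fun k => aux_log_nonpos hσ (hmem k)
  set ε := f ρbar - f σ with hε
  have hε0 : 0 < ε := by rw [hε]; linarith
  have hstep2 : ∀ k, δ * ε ≤ α / τ * (f (ρseq k) - f (ρseq (k + 1))) + (T (k + 1) - T k) := by
    intro k
    have h3 := aux_three hd (hpd k) (hmem k).2 (hG k) (αseq k) hσ
    rw [← hstep k] at h3
    have hg := aux_grad hconv (hU k) (hDU hσ) (hgrad _ (hU k))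
    have ha := harm' k
    have hl := hlow k
    have hm : f (ρseq (k + 1)) ≤ f (ρseq k) := hmono (Nat.le_succ k)
    have e1 : hsInner (f' (ρseq k)) (σ - ρseq k) =
        - hsInner (f' (ρseq k)) (ρseq (k + 1) - σ) +
          hsInner (f' (ρseq k)) (ρseq (k + 1) - ρseq k) := by
      simp only [aux_hs_sub]; ring
    rw [e1] at hg
    set q := hsInner (f' (ρseq k)) (ρseq (k + 1) - ρseq k)
    set w := hsInner (f' (ρseq k)) (ρseq (k + 1) - σ)
    set Δ := f (ρseq k) - f (ρseq (k + 1)) with hΔ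
    have hq : -q ≤ Δ / τ := by rw [le_div_iff₀ hτ0]; linarith
    have hΔ0 : 0 ≤ Δ / τ := div_nonneg (by linarith) hτ0.le
    have b1 : ε ≤ w + Δ / τ := by linarith
    have b2 : δ * ε ≤ αseq k * ε := mul_le_mul_of_nonneg_right (hδle k) hε0.le
    have b3 : αseq k * ε ≤ αseq k * (w + Δ / τ) := mul_le_mul_of_nonneg_left b1 (hαpos k).le
    have b4 : αseq k * (Δ / τ) ≤ α * (Δ / τ) := mul_le_mul_of_nonneg_right (hαle k) hΔ0
    have b5 : α / τ * Δ = α * (Δ / τ) := by ring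
    rw [b5]
    have b6 : αseq k * w ≤ T (k + 1) - T k := h3
    linarith
  have hsum : ∀ n : ℕ, n * (δ * ε) ≤ α / τ * (f (ρseq 0) - f (ρseq n)) + (T n - T 0) := by
    intro n
    induction n with
    | zero => simp
    | succ n ih =>
      have := hstep2 n
      push_cast
      linarith
  have hατ : 0 < α / τ := div_pos hα hτ0
  obtain ⟨n, hn⟩ := exists_nat_gt ((α / τ * (f (ρseq 0) - f ρbar) - T 0) / (δ * ε))
  rw [div_lt_iff₀ (mul_pos hδ hε0)] at hn
  have h1 := hsum n
  have h2 := mul_le_mul_of_nonneg_left (hlow n) hατ.le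
  have h3 := hTle n
  linarith

end
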